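/- arXiv:1807.03214 — 8 statements merged into one kernel-verified Lean document; each statement's English description precedes it below -/
import Mathlib

section
/- For every ε ≥ 0 and all real numbers a, b: φ_ε(a,b) = 0 if and only if a ≥ 0, b ≥ 0, and 2ab = ε². -/
/-!
The equation `φ_ε(a,b) = 0` says `√(a² + b² + ε²) = a + b`. Squaring gives `2ab = ε²`, and since the
root dominates both `a` and `b`, the signs follow from the equation itself. Conversely, `2ab = ε²`
turns the radicand into `(a + b)²`, whose root is `a + b` when `a, b ≥ 0`.
-/

/-- The smoothed Fischer–Burmeister function `φ_ε(a,b) = a + b - √(a² + b² + ε²)`. -/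
noncomputable def phiFB (ε a b : ℝ) : ℝ := a + b - Real.sqrt (a ^ 2 + b ^ 2 + ε ^ 2)

/-- For every ε ≥ 0 and all real a, b:
`φ_ε(a,b) = 0 ↔ a ≥ 0 ∧ b ≥ 0 ∧ 2ab = ε²`. -/
theorem statement_0 (ε : ℝ) (hε : 0 ≤ ε) (a b : ℝ) :
    phiFB ε a b = 0 ↔ 0 ≤ a ∧ 0 ≤ b ∧ 2 * a * b = ε ^ 2 := by
  unfold phiFB
  constructor
  · intro h
    have hs : Real.sqrt (a ^ 2 + b ^ 2 + ε ^ 2) = a + b := by linarith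
    -- Each of `a`, `b` is at most the root, which equals `a + b`; so the other one is nonnegative.
    have ha : a ≤ Real.sqrt (a ^ 2 + b ^ 2 + ε ^ 2) :=
      Real.le_sqrt_of_sq_le (by nlinarith [sq_nonneg b, sq_nonneg ε])
    have hb : b ≤ Real.sqrt (a ^ 2 + b ^ 2 + ε ^ 2) :=
      Real.le_sqrt_of_sq_le (by nlinarith [sq_nonneg a, sq_nonneg ε])
    have hsq : Real.sqrt (a ^ 2 + b ^ 2 + ε ^ 2) ^ 2 = a ^ 2 + b ^ 2 + ε ^ 2 :=
      Real.sq_sqrt (by positivity)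
    rw [hs] at hsq
    exact ⟨by linarith, by linarith, by linarith⟩
  · rintro ⟨ha, hb, h⟩
    have hsq : a ^ 2 + b ^ 2 + ε ^ 2 = (a + b) ^ 2 := by rw [← h]; ring
    rw [hsq, Real.sqrt_sq (add_nonneg ha hb), sub_self]
end

section
/- Suppose (z*,v*) is a KKT point of the QP (i.e. Hz* + f + Aᵀv* = 0, v* ≥ 0, b − Az* ≥ 0, v*_i(b − Az*)_i = 0 for all i) that satisfies the strong second order sufficient condition: for every u ≠ 0 with A_i u = 0 for all i ∈ I_a⁺(z*,v*) := {i : A_i z* = b_i and v*_i > 0}, one has uᵀHu > 0. Then z* is the unique global minimizer of the QP: for every z with Az ≤ b one has g(z) ≥ g(z*), with equality only if z = z*. -/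
/-!
With `u = z - z*`, expanding the quadratic and using stationarity and complementarity gives the
exact gap formula
`g(z) - g(z*) = ½ uᵀHu + ∑ᵢ v*ᵢ (bᵢ - Aᵢ z)` (`qpObj_gap`).
For feasible `z` every term on the right is nonnegative, so `z*` is a minimizer. If the gap
vanishes, then so does every term: `uᵀHu = 0`, and `Aᵢ z = bᵢ` whenever `v*ᵢ > 0`. Hence
`Aᵢ u = 0` on the strongly active constraints, and the second order condition forces `u = 0`.
-/

open Matrix

/-- The objective of the QP: `g(z) = ½ zᵀHz + fᵀz`. -/
noncomputable def qpObj (n : ℕ) (H : Matrix (Fin n) (Fin n) ℝ) (f : Fin n → ℝ)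
    (z : Fin n → ℝ) : ℝ :=
  (1 / 2) * (z ⬝ᵥ H.mulVec z) + f ⬝ᵥ z

/-- The optimality gap at an arbitrary (not necessarily feasible) `z`: stationarity
turns the linear term into `-v*ᵀA(z - z*)`, and complementarity replaces `Az*` by `b` there. -/
lemma qpObj_gap {n q : ℕ} {H : Matrix (Fin n) (Fin n) ℝ} (hH : H.PosSemidef)
    {A : Matrix (Fin q) (Fin n) ℝ} {f : Fin n → ℝ} {b : Fin q → ℝ}
    {zs : Fin n → ℝ} {vs : Fin q → ℝ}
    (hstat : H.mulVec zs + f + Aᵀ.mulVec vs = 0)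
    (hcomp : ∀ i, vs i * (b i - A.mulVec zs i) = 0) (z : Fin n → ℝ) :
    qpObj n H f z - qpObj n H f zs =
      (1 / 2) * ((z - zs) ⬝ᵥ H.mulVec (z - zs)) + ∑ i, vs i * (b i - A.mulVec z i) := by
  have hsymm : z ⬝ᵥ H.mulVec zs = zs ⬝ᵥ H.mulVec z := by
    have hT : Hᵀ = H := by simpa [Matrix.IsHermitian] using hH.isHermitian
    rw [dotProduct_mulVec, ← mulVec_transpose, hT, dotProduct_comm]
  have hlin : (z - zs) ⬝ᵥ (H.mulVec zs + f + Aᵀ.mulVec vs) = 0 := by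
    rw [hstat, dotProduct_zero]
  have hmult : ∑ i, vs i * (b i - A.mulVec z i) = -((z - zs) ⬝ᵥ Aᵀ.mulVec vs) := by
    rw [mulVec_transpose, dotProduct_comm, ← dotProduct_mulVec, mulVec_sub, dotProduct,
      ← Finset.sum_neg_distrib]
    refine Finset.sum_congr rfl fun i _ => ?_
    rw [Pi.sub_apply]
    linear_combination hcomp i
  rw [hmult]
  simp only [qpObj, mulVec_sub, dotProduct_sub, sub_dotProduct, dotProduct_add] at hlin ⊢
  rw [dotProduct_comm f z, dotProduct_comm f zs]
  linear_combination hlin - (1 / 2) * hsymm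

/-- a KKT point `(z*, v*)` of the QP satisfying the strong second order
sufficient condition is such that `z*` is the unique global minimizer of the QP. -/
theorem statement_4 (n q : ℕ) (H : Matrix (Fin n) (Fin n) ℝ) (hH : H.PosSemidef)
    (A : Matrix (Fin q) (Fin n) ℝ) (f : Fin n → ℝ) (b : Fin q → ℝ)
    (zs : Fin n → ℝ) (vs : Fin q → ℝ)
    (hstat : H.mulVec zs + f + Aᵀ.mulVec vs = 0)
    (hv : ∀ i, 0 ≤ vs i)
    (hfeas : ∀ i, A.mulVec zs i ≤ b i)
    (hcomp : ∀ i, vs i * (b i - A.mulVec zs i) = 0)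
    (hssosc : ∀ u : Fin n → ℝ, u ≠ 0 →
      (∀ i, A.mulVec zs i = b i ∧ 0 < vs i → A i ⬝ᵥ u = 0) →
      0 < u ⬝ᵥ H.mulVec u) :
    ∀ z : Fin n → ℝ, (∀ i, A.mulVec z i ≤ b i) →
      qpObj n H f zs ≤ qpObj n H f z ∧ (qpObj n H f z = qpObj n H f zs → z = zs) := by
  intro z hz
  have hgap := qpObj_gap hH hstat hcomp z
  have hquad : 0 ≤ (z - zs) ⬝ᵥ H.mulVec (z - zs) := by
    simpa using hH.dotProduct_mulVec_nonneg (z - zs)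
  have hterm : ∀ i ∈ Finset.univ, 0 ≤ vs i * (b i - A.mulVec z i) := fun i _ =>
    mul_nonneg (hv i) (sub_nonneg.2 (hz i))
  have hsum := Finset.sum_nonneg hterm
  refine ⟨by linarith, fun heq => ?_⟩
  by_contra hne
  refine (hssosc (z - zs) (sub_ne_zero.2 hne) ?_).ne' (by linarith)
  rintro i ⟨hact, hpos⟩
  have hzero := (Finset.sum_eq_zero_iff_of_nonneg hterm).1 (by linarith) i (Finset.mem_univ i)
  have hzact := (mul_eq_zero.1 hzero).resolve_left hpos.ne'
  change A.mulVec (z - zs) i = 0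
  rw [mulVec_sub, Pi.sub_apply]
  linarith
end

section
/- Let H be a symmetric positive semidefinite n×n real matrix and A a q×n real matrix with ker H ∩ ker A = {0}, and let C and D be q×q diagonal matrices with strictly positive diagonal entries. Then the (n+q)×(n+q) block matrix V = [[H, Aᵀ], [−CA, D]] is invertible. -/
open Matrix

/-! It suffices that the kernel of the block matrix is trivial. If `(u, v)` lies in it, then
`H u + Aᵀ v = 0` and `dᵢ vᵢ = cᵢ (A u)ᵢ`. Pairing the first equation with `u` gives
`uᵀ H u + ∑ᵢ (A u)ᵢ vᵢ = 0`, where `(A u)ᵢ vᵢ = (dᵢ / cᵢ) vᵢ²`. All these terms are nonnegative,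
so they vanish: `v = 0`, hence `A u = 0`, and `H u = 0`, so `u = 0` by the kernel condition. -/

/-- if `H` is symmetric positive semidefinite, `ker H ∩ ker A = {0}`, and
`C`, `D` are diagonal with strictly positive diagonal entries, then the block matrix
`V = [[H, Aᵀ], [−CA, D]]` is invertible. -/
theorem statement_7 (n q : ℕ) (H : Matrix (Fin n) (Fin n) ℝ) (hH : H.PosSemidef)
    (A : Matrix (Fin q) (Fin n) ℝ)
    (hker : ∀ u : Fin n → ℝ, H.mulVec u = 0 → A.mulVec u = 0 → u = 0)
    (c d : Fin q → ℝ) (hc : ∀ i, 0 < c i) (hd : ∀ i, 0 < d i) :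
    IsUnit (Matrix.fromBlocks H Aᵀ (-(Matrix.diagonal c * A)) (Matrix.diagonal d)) := by
  rw [← Matrix.mulVec_injective_iff_isUnit]
  refine (injective_iff_map_eq_zero (Matrix.mulVecLin _)).2 fun w hw => ?_
  obtain ⟨u, v, rfl⟩ : ∃ u v, w = Sum.elim u v :=
    ⟨w ∘ Sum.inl, w ∘ Sum.inr, (Sum.elim_comp_inl_inr w).symm⟩
  rw [Matrix.mulVecLin_apply, Matrix.fromBlocks_mulVec] at hw
  have h1 : H *ᵥ u + Aᵀ *ᵥ v = 0 := by
    ext i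
    simpa using congrFun hw (Sum.inl i)
  have h2 : ∀ i, d i * v i = c i * (A *ᵥ u) i := by
    intro i
    have h := congrFun hw (Sum.inr i)
    simp [Matrix.neg_mulVec, ← Matrix.mulVec_mulVec, Matrix.mulVec_diagonal] at h
    linarith
  have hterm : ∀ i, (A *ᵥ u) i * v i = d i / c i * v i ^ 2 := by
    intro i
    have := (hc i).ne'
    field_simp
    linear_combination (-v i) * h2 i
  have hnn : ∀ i, 0 ≤ (A *ᵥ u) i * v i := by
    intro i
    have := hc i
    have := hd i
    rw [hterm]
    positivity
  have hsum : u ⬝ᵥ H *ᵥ u + ∑ i, (A *ᵥ u) i * v i = 0 := by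
    have h := congrArg (fun x => u ⬝ᵥ x) h1
    simp only [dotProduct_add, dotProduct_zero] at h
    rw [Matrix.dotProduct_mulVec u Aᵀ v, Matrix.vecMul_transpose] at h
    exact h
  have hq : 0 ≤ u ⬝ᵥ H *ᵥ u := by simpa using hH.dotProduct_mulVec_nonneg u
  have hs : 0 ≤ ∑ i, (A *ᵥ u) i * v i := Finset.sum_nonneg fun i _ => hnn i
  have hs0 : ∑ i, (A *ᵥ u) i * v i = 0 := by linarith
  have hv : v = 0 := by
    ext i
    have h := (Finset.sum_eq_zero_iff_of_nonneg fun i _ => hnn i).1 hs0 i (Finset.mem_univ i)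
    rw [hterm] at h
    simpa [(hc i).ne', (hd i).ne'] using h
  subst hv
  have hu : u = 0 := by
    refine hker u (by simpa using h1) ?_
    ext i
    simpa [(hc i).ne'] using (h2 i).symm
  subst hu
  ext (i | i) <;> rfl
end

section
/- Fix ε > 0 and δ ≥ 0. Let H be a symmetric positive semidefinite n×n real matrix, A a q×n real matrix with ker H ∩ ker A = {0}, b ∈ ℝ^q, and let (z,v) ∈ ℝⁿ × ℝ^q with y = b − Az. Define the diagonal matrices C = diag(γ) and D = diag(μ) with entries γ_i = 1 − y_i/√(y_i² + v_i² + ε²) + δ and μ_i = 1 − v_i/√(y_i² + v_i² + ε²) + δ. Then the block matrix K = [[H, Aᵀ], [−CA, D]] is invertible. -/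
/-!
The matrix is square, so it suffices that its kernel is trivial. If `(x, w)` lies in the kernel, then
`H x + Aᵀ w = 0` and `γᵢ (A x)ᵢ = μᵢ wᵢ`. Pairing the first equation with `x` gives
`xᵀ H x + ∑ᵢ (A x)ᵢ wᵢ = 0`. The regularization `ε > 0` makes every `γᵢ` and `μᵢ` positive
(`one_sub_div_sqrt_add_pos`), so the second equation forces `(A x)ᵢ wᵢ ≥ 0`, and all terms vanish.
Hence `H x = 0` and, since `(A x)ᵢ` and `wᵢ` are positive multiples of each other, `A x = 0` and
`w = 0`; the kernel condition then gives `x = 0`.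
-/

open Matrix

theorem one_sub_div_sqrt_add_pos {a c ε δ : ℝ} (hε : 0 < ε) (hδ : 0 ≤ δ) :
    0 < 1 - a / Real.sqrt (a ^ 2 + c ^ 2 + ε ^ 2) + δ := by
  have hs : 0 < Real.sqrt (a ^ 2 + c ^ 2 + ε ^ 2) := Real.sqrt_pos.2 (by positivity)
  have hlt : a < Real.sqrt (a ^ 2 + c ^ 2 + ε ^ 2) :=
    Real.lt_sqrt_of_sq_lt (by nlinarith [sq_nonneg c, pow_pos hε 2])
  have := (div_lt_one hs).2 hlt
  linarith

/-- for `ε > 0`, `δ ≥ 0`, `H` symmetric positive semidefinite with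
`ker H ∩ ker A = {0}`, and the FBRS diagonal matrices `C = diag(γ)`, `D = diag(μ)` with
`γᵢ = 1 − yᵢ/√(yᵢ² + vᵢ² + ε²) + δ`, `μᵢ = 1 − vᵢ/√(yᵢ² + vᵢ² + ε²) + δ`, `y = b − Az`,
the iteration matrix `K = [[H, Aᵀ], [−CA, D]]` is invertible. -/
theorem statement_8 (n q : ℕ) (ε δ : ℝ) (hε : 0 < ε) (hδ : 0 ≤ δ)
    (H : Matrix (Fin n) (Fin n) ℝ) (hH : H.PosSemidef)
    (A : Matrix (Fin q) (Fin n) ℝ)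
    (hker : ∀ u : Fin n → ℝ, H.mulVec u = 0 → A.mulVec u = 0 → u = 0)
    (b : Fin q → ℝ) (z : Fin n → ℝ) (v : Fin q → ℝ)
    (y : Fin q → ℝ) (hy : y = b - A.mulVec z)
    (γ μ : Fin q → ℝ)
    (hγ : ∀ i, γ i = 1 - y i / Real.sqrt (y i ^ 2 + v i ^ 2 + ε ^ 2) + δ)
    (hμ : ∀ i, μ i = 1 - v i / Real.sqrt (y i ^ 2 + v i ^ 2 + ε ^ 2) + δ) :
    IsUnit (Matrix.fromBlocks H Aᵀ (-(Matrix.diagonal γ * A)) (Matrix.diagonal μ)) := by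
  have hγpos : ∀ i, 0 < γ i := fun i => by
    rw [hγ i]
    exact one_sub_div_sqrt_add_pos hε hδ
  have hμpos : ∀ i, 0 < μ i := fun i => by
    rw [hμ i, add_comm (y i ^ 2)]
    exact one_sub_div_sqrt_add_pos hε hδ
  refine mulVec_injective_iff_isUnit.1 ?_
  rw [← coe_mulVecLin, ← LinearMap.ker_eq_bot]
  refine ker_mulVecLin_eq_bot_iff.2 fun u hu => ?_
  rw [fromBlocks_mulVec] at hu
  set x : Fin n → ℝ := u ∘ Sum.inl with hx
  set w : Fin q → ℝ := u ∘ Sum.inr with hw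
  have h1 : H *ᵥ x + Aᵀ *ᵥ w = 0 := by
    funext i
    exact congrFun hu (Sum.inl i)
  have h2 : ∀ i, γ i * (A *ᵥ x) i = μ i * w i := fun i => by
    have h := congrFun hu (Sum.inr i)
    simp only [Sum.elim_inr, Pi.add_apply, neg_mulVec, Pi.neg_apply, ← mulVec_mulVec,
      mulVec_diagonal, Pi.zero_apply] at h
    linarith
  have hprod : ∀ i, 0 ≤ (A *ᵥ x) i * w i := fun i => by
    -- `γᵢ (A x)ᵢ wᵢ = μᵢ wᵢ²`, and `γᵢ > 0`
    refine nonneg_of_mul_nonneg_right (a := γ i) ?_ (hγpos i)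
    rw [← mul_assoc, h2 i, mul_assoc]
    exact mul_nonneg (hμpos i).le (mul_self_nonneg _)
  have hsum : x ⬝ᵥ (H *ᵥ x) + (A *ᵥ x) ⬝ᵥ w = 0 := by
    have h := congrArg (fun t => x ⬝ᵥ t) h1
    simpa only [dotProduct_add, dotProduct_zero, dotProduct_mulVec x Aᵀ w, vecMul_transpose]
      using h
  have hquad : 0 ≤ x ⬝ᵥ (H *ᵥ x) := by
    simpa using hH.dotProduct_mulVec_nonneg x
  have hdot : 0 ≤ (A *ᵥ x) ⬝ᵥ w := Finset.sum_nonneg fun i _ => hprod i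
  have hHx : H *ᵥ x = 0 := (hH.dotProduct_mulVec_zero_iff x).1 (by
    rw [star_trivial]
    linarith)
  have hdot0 : ∑ i, (A *ᵥ x) i * w i = 0 := by
    change (A *ᵥ x) ⬝ᵥ w = 0
    linarith
  have hw0 : ∀ i, w i = 0 := fun i => by
    have h := (Finset.sum_eq_zero_iff_of_nonneg fun i _ => hprod i).1 hdot0 i (Finset.mem_univ i)
    rcases mul_eq_zero.1 h with h | h
    · have h' := h2 i
      rw [h, mul_zero] at h'
      exact (mul_eq_zero.1 h'.symm).resolve_left (hμpos i).ne'
    · exact h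
  have hAx : A *ᵥ x = 0 := by
    funext i
    have h := h2 i
    rw [hw0 i, mul_zero] at h
    exact (mul_eq_zero.1 h).resolve_left (hγpos i).ne'
  have hx0 := hker x hHx hAx
  funext i
  rcases i with i | i
  · exact congrFun hx0 i
  · exact hw0 i
end

section
/- The function ψ : ℝ² → ℝ defined by ψ(a,b) = ½(a + b − √(a² + b²))², i.e. one half the square of the (non-smooth) Fischer–Burmeister function, is continuously differentiable on all of ℝ², and its gradient at the origin is (0,0). -/
/-!
Write `r = √(a² + b²)` and `φ = a + b - r`, so that `ψ = φ² / 2`. Away from the origin `ψ` is smooth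
with gradient `(φ (1 - a / r), φ (1 - b / r))`. At the origin `|φ| ≤ 4 ‖(a, b)‖`, hence
`ψ = O(‖(a, b)‖²)` has derivative zero there, which agrees with the formula because `φ(0, 0) = 0`.
The gradient is continuous at the origin since `|a / r|, |b / r| ≤ 1` and `φ → 0`.
-/

lemma fischerBurmeister_sq_add_sq_pos {p : ℝ × ℝ} (hp : p ≠ 0) : 0 < p.1 ^ 2 + p.2 ^ 2 := by
  by_contra h
  apply hp
  have h1 : p.1 = 0 := by nlinarith [sq_nonneg p.1, sq_nonneg p.2]
  have h2 : p.2 = 0 := by nlinarith [sq_nonneg p.1, sq_nonneg p.2]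
  exact Prod.ext h1 h2

lemma abs_fischerBurmeister_le (p : ℝ × ℝ) :
    |p.1 + p.2 - √(p.1 ^ 2 + p.2 ^ 2)| ≤ 4 * ‖p‖ := by
  have h1 : |p.1| ≤ ‖p‖ := norm_fst_le p
  have h2 : |p.2| ≤ ‖p‖ := norm_snd_le p
  have h3 : √(p.1 ^ 2 + p.2 ^ 2) ≤ |p.1| + |p.2| := by
    apply Real.sqrt_le_iff.2 ⟨by positivity, ?_⟩
    nlinarith [sq_abs p.1, sq_abs p.2, mul_nonneg (abs_nonneg p.1) (abs_nonneg p.2)]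
  have h4 := Real.sqrt_nonneg (p.1 ^ 2 + p.2 ^ 2)
  rw [abs_le] at *
  constructor <;> linarith [abs_le.2 h1, abs_le.2 h2]

/-- The coefficients of the gradient are of this form, with `u` one of the two coordinates.
At the origin the quotient takes the junk value `0`, which is harmless as its factor vanishes. -/
lemma continuous_fischerBurmeister_mul {u : ℝ × ℝ → ℝ} (hu : Continuous u)
    (hle : ∀ p, |u p| ≤ √(p.1 ^ 2 + p.2 ^ 2)) :
    Continuous fun p : ℝ × ℝ =>
      (p.1 + p.2 - √(p.1 ^ 2 + p.2 ^ 2)) * (1 - u p / √(p.1 ^ 2 + p.2 ^ 2)) := by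
  rw [continuous_iff_continuousAt]
  intro p
  by_cases hp : p = 0
  · subst hp
    have key : ∀ p : ℝ × ℝ,
        ‖(p.1 + p.2 - √(p.1 ^ 2 + p.2 ^ 2)) * (1 - u p / √(p.1 ^ 2 + p.2 ^ 2))‖
          ≤ 4 * ‖p‖ * 2 := by
      intro p
      rw [norm_mul]
      refine mul_le_mul (abs_fischerBurmeister_le p) ?_ (norm_nonneg _) (by positivity)
      have : |u p / √(p.1 ^ 2 + p.2 ^ 2)| ≤ 1 := by
        rw [abs_div, abs_of_nonneg (Real.sqrt_nonneg _)]
        exact div_le_one_of_le₀ (hle p) (Real.sqrt_nonneg _)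
      rw [Real.norm_eq_abs, abs_le]
      rw [abs_le] at this
      constructor <;> linarith
    have hlim : Filter.Tendsto (fun p : ℝ × ℝ => 4 * ‖p‖ * 2) (nhds 0) (nhds 0) := by
      have : Continuous fun p : ℝ × ℝ => 4 * ‖p‖ * 2 := by fun_prop
      simpa using this.tendsto 0
    simpa [ContinuousAt] using squeeze_zero_norm key hlim
  · have hr := (Real.sqrt_pos.2 (fischerBurmeister_sq_add_sq_pos hp)).ne'
    have hu' := hu.continuousAt (x := p)
    fun_prop (disch := exact hr)

lemma hasFDerivAt_half_fischerBurmeister_sq (p : ℝ × ℝ) :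
    HasFDerivAt (fun p : ℝ × ℝ => (1 / 2) * (p.1 + p.2 - √(p.1 ^ 2 + p.2 ^ 2)) ^ 2)
      (((p.1 + p.2 - √(p.1 ^ 2 + p.2 ^ 2)) * (1 - p.1 / √(p.1 ^ 2 + p.2 ^ 2))) •
          ContinuousLinearMap.fst ℝ ℝ ℝ +
        ((p.1 + p.2 - √(p.1 ^ 2 + p.2 ^ 2)) * (1 - p.2 / √(p.1 ^ 2 + p.2 ^ 2))) •
          ContinuousLinearMap.snd ℝ ℝ ℝ) p := by
  by_cases hp : p = 0
  · subst hp
    have hO : (fun p : ℝ × ℝ => (1 / 2) * (p.1 + p.2 - √(p.1 ^ 2 + p.2 ^ 2)) ^ 2)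
        =O[nhds 0] fun p => ‖p - 0‖ ^ 2 := by
      refine Asymptotics.IsBigO.of_bound 8 (Filter.Eventually.of_forall fun p => ?_)
      have h := pow_le_pow_left₀ (abs_nonneg _) (abs_fischerBurmeister_le p) 2
      rw [sq_abs] at h
      rw [sub_zero, Real.norm_of_nonneg (by positivity), Real.norm_of_nonneg (by positivity)]
      linarith
    simpa using hO.hasFDerivAt one_lt_two
  · have hpos := fischerBurmeister_sq_add_sq_pos hp
    have hr := (Real.sqrt_pos.2 hpos).ne'
    have h1 : HasFDerivAt (fun p : ℝ × ℝ => p.1) (ContinuousLinearMap.fst ℝ ℝ ℝ) p :=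
      hasFDerivAt_fst
    have h2 : HasFDerivAt (fun p : ℝ × ℝ => p.2) (ContinuousLinearMap.snd ℝ ℝ ℝ) p :=
      hasFDerivAt_snd
    have h := (((h1.add h2).sub (((h1.pow 2).add (h2.pow 2)).sqrt hpos.ne')).pow 2).const_mul
      (1 / 2 : ℝ)
    refine h.congr_fderiv ?_
    ext <;> simp <;> field_simp

/-- `ψ(a,b) = ½(a + b − √(a² + b²))²`, one half the square of the
(non-smooth) Fischer–Burmeister function, is continuously differentiable on all of
`ℝ²`, and its gradient (Fréchet derivative) at the origin is zero. -/
theorem statement_14 :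
    ContDiff ℝ 1 (fun p : ℝ × ℝ =>
        (1 / 2) * (p.1 + p.2 - Real.sqrt (p.1 ^ 2 + p.2 ^ 2)) ^ 2) ∧
      fderiv ℝ (fun p : ℝ × ℝ =>
        (1 / 2) * (p.1 + p.2 - Real.sqrt (p.1 ^ 2 + p.2 ^ 2)) ^ 2) (0, 0) = 0 := by
  refine ⟨?_, ?_⟩
  · rw [contDiff_one_iff_fderiv]
    refine ⟨fun p => (hasFDerivAt_half_fischerBurmeister_sq p).differentiableAt, ?_⟩
    rw [funext fun p => (hasFDerivAt_half_fischerBurmeister_sq p).fderiv]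
    have c1 := continuous_fischerBurmeister_mul continuous_fst fun p =>
      Real.abs_le_sqrt (le_add_of_nonneg_right (sq_nonneg p.2))
    have c2 := continuous_fischerBurmeister_mul continuous_snd fun p =>
      Real.abs_le_sqrt (le_add_of_nonneg_left (sq_nonneg p.1))
    exact (c1.smul continuous_const).add (c2.smul continuous_const)
  · rw [(hasFDerivAt_half_fischerBurmeister_sq (0, 0)).fderiv]
    simp
end

section
/- Let E be a finite-dimensional real inner product space, G : E → E continuously differentiable on a neighborhood of x*, with G(x*) = 0, with the derivative DG Lipschitz continuous on a neighborhood of x*, and with DG(x*) invertible. Fix γ ≥ 0. Then there exist η > 0 and r > 0 such that for every x with ‖x − x*‖ ≤ r and every linear map K : E → E with ‖K − DG(x)‖ ≤ γ‖G(x)‖: K is invertible and the regularized Newton step satisfies ‖(x − K⁻¹ G(x)) − x*‖ ≤ η‖x − x*‖². -/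
/-!
Write `A = DG(x*)` and `ρ = ‖x - x*‖`. Near `x*` the Lipschitz bound on `DG` gives
`‖DG(x) - A‖ ≤ L ρ`, and the mean value inequality then gives `‖G(x) - A (x - x*)‖ ≤ L ρ²`.
In particular `‖G(x)‖ = O(ρ)`, so every admissible `K` satisfies `‖K - A‖ ≤ M ρ`. Since `A` is
bounded below, so is `K` for small `ρ`, uniformly in `x` and `K`; in finite dimension this makes
`K` invertible. The new error `e = x - d - x*` satisfies
`K e = (K - A)(x - x*) - (G(x) - A (x - x*))`, of norm at most `(M + L) ρ²`, and the lower bound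
on `K` turns this into the quadratic estimate on `e`.
-/

/-- A perturbation of an operator bounded below by `1 / b`, of size at most `1 / (2 b)`, is bounded
below by `1 / (2 b)`. -/
lemma norm_le_of_near {E : Type*} [NormedAddCommGroup E] [NormedSpace ℝ E]
    {A K : E →L[ℝ] E} {b c : ℝ} (hb : 0 < b) (hA : ∀ v, ‖v‖ ≤ b * ‖A v‖)
    (hKA : ‖K - A‖ ≤ c) (hc : b * c ≤ 1 / 2) (v : E) : ‖v‖ ≤ 2 * b * ‖K v‖ := by
  have h1 : ‖(K - A) v‖ ≤ c * ‖v‖ := (K - A).le_of_opNorm_le hKA v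
  have h2 : ‖A v‖ ≤ ‖K v‖ + ‖(K - A) v‖ := by
    have : A v = K v - (K - A) v := by simp
    rw [this]
    exact norm_sub_le _ _
  have h3 : b * ‖A v‖ ≤ b * (‖K v‖ + c * ‖v‖) := by gcongr; linarith
  have h4 : b * c * ‖v‖ ≤ 1 / 2 * ‖v‖ := by gcongr
  linarith [hA v]

lemma isUnit_of_norm_le {E : Type*} [NormedAddCommGroup E] [NormedSpace ℝ E]
    [FiniteDimensional ℝ E] {K : E →L[ℝ] E} {C : ℝ} (hK : ∀ v, ‖v‖ ≤ C * ‖K v‖) : IsUnit K := by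
  haveI : CompleteSpace E := FiniteDimensional.complete ℝ E
  have hinj : Function.Injective K := by
    rw [injective_iff_map_eq_zero]
    intro v hv
    have := hK v
    rw [hv, norm_zero, mul_zero] at this
    exact norm_le_zero_iff.mp this
  rw [ContinuousLinearMap.isUnit_iff_bijective]
  exact ⟨hinj, (LinearMap.injective_iff_surjective (f := (K : E →ₗ[ℝ] E))).mp hinj⟩

/-- local quadratic convergence of the regularized Newton step.
If `G` is C¹ on a neighborhood of a root `x*`, `DG` is Lipschitz on a neighborhood of
`x*`, and `DG(x*)` is invertible, then for any `γ ≥ 0` there are `η > 0`, `r > 0` such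
that for all `x` with `‖x − x*‖ ≤ r` and all linear maps `K` with
`‖K − DG(x)‖ ≤ γ‖G(x)‖`: `K` is invertible and the regularized Newton iterate
`x − K⁻¹G(x)` satisfies `‖x − K⁻¹G(x) − x*‖ ≤ η‖x − x*‖²`. -/
theorem statement_17 {E : Type*} [NormedAddCommGroup E] [InnerProductSpace ℝ E]
    [FiniteDimensional ℝ E]
    (G : E → E) (xs : E) (hroot : G xs = 0)
    (s : Set E) (hs : s ∈ nhds xs) (hC1 : ContDiffOn ℝ 1 G s)
    (t : Set E) (ht : t ∈ nhds xs) (LG : NNReal)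
    (hLip : LipschitzOnWith LG (fun x => fderiv ℝ G x) t)
    (hinv : IsUnit (fderiv ℝ G xs)) (γ : ℝ) (hγ : 0 ≤ γ) :
    ∃ η > (0 : ℝ), ∃ r > (0 : ℝ), ∀ x : E, ‖x - xs‖ ≤ r →
      ∀ K : E →L[ℝ] E, ‖K - fderiv ℝ G x‖ ≤ γ * ‖G x‖ →
        IsUnit K ∧ ∀ d : E, K d = G x → ‖x - d - xs‖ ≤ η * ‖x - xs‖ ^ 2 := by
  obtain ⟨R, hR, hball⟩ := Metric.mem_nhds_iff.mp (Filter.inter_mem hs ht)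
  set A := fderiv ℝ G xs with hAdef
  set L : ℝ := (LG : ℝ) with hL
  have hL0 : 0 ≤ L := LG.2
  obtain ⟨b, hb, hAb⟩ : ∃ b : ℝ, 0 < b ∧ ∀ v, ‖v‖ ≤ b * ‖A v‖ := by
    obtain ⟨u, hu⟩ := hinv
    refine ⟨‖(↑u⁻¹ : E →L[ℝ] E)‖ + 1, by positivity, fun v => ?_⟩
    have h : (↑u⁻¹ : E →L[ℝ] E) (A v) = v := by
      rw [← hu, ← ContinuousLinearMap.mul_apply, Units.inv_mul, ContinuousLinearMap.one_apply]
    calc ‖v‖ = ‖(↑u⁻¹ : E →L[ℝ] E) (A v)‖ := by rw [h]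
      _ ≤ ‖(↑u⁻¹ : E →L[ℝ] E)‖ * ‖A v‖ := ContinuousLinearMap.le_opNorm _ _
      _ ≤ _ := by gcongr; linarith
  have hdiff : ∀ z ∈ Metric.ball xs R, DifferentiableAt ℝ G z := fun z hz =>
    (hC1.differentiableOn one_ne_zero).differentiableAt
      (Filter.mem_of_superset (Metric.isOpen_ball.mem_nhds hz) fun y hy => (hball hy).1)
  have hD : ∀ z ∈ Metric.ball xs R, ‖fderiv ℝ G z - A‖ ≤ L * ‖z - xs‖ := fun z hz =>
    hLip.norm_sub_le (hball hz).2 (hball (Metric.mem_ball_self hR)).2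
  -- The mean value inequality on the closed ball of radius `‖x - xs‖`.
  have hTaylor : ∀ x ∈ Metric.ball xs R, ‖G x - A (x - xs)‖ ≤ L * ‖x - xs‖ ^ 2 := by
    intro x hx
    have hsub : ∀ z ∈ Metric.closedBall xs ‖x - xs‖, z ∈ Metric.ball xs R := fun z hz =>
      lt_of_le_of_lt hz (by rwa [Metric.mem_ball, dist_eq_norm] at hx)
    have := (convex_closedBall xs ‖x - xs‖).norm_image_sub_le_of_norm_fderiv_le' (𝕜 := ℝ)
      (f := G) (φ := A) (C := L * ‖x - xs‖) (x := xs) (y := x)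
      (fun z hz => hdiff z (hsub z hz))
      (fun z hz => (hD z (hsub z hz)).trans (by
        rw [Metric.mem_closedBall, dist_eq_norm] at hz
        gcongr))
      (Metric.mem_closedBall_self (norm_nonneg _)) (by simp [dist_eq_norm])
    rw [hroot, sub_zero] at this
    linarith
  -- `M` bounds `‖K - A‖ / ‖x - xs‖`; the summand `1` only makes it positive.
  set M : ℝ := γ * (‖A‖ + L) + L + 1 with hM
  have hM0 : 0 < M := by positivity
  refine ⟨2 * b * (M + L), by positivity, min (R / 2) (min 1 (1 / (2 * b * M))),
    by positivity, fun x hx K hK => ?_⟩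
  have hρR : ‖x - xs‖ ≤ R / 2 := hx.trans (min_le_left _ _)
  have hρ1 : ‖x - xs‖ ≤ 1 := hx.trans ((min_le_right _ _).trans (min_le_left _ _))
  have hρM : ‖x - xs‖ ≤ 1 / (2 * b * M) := hx.trans ((min_le_right _ _).trans (min_le_right _ _))
  have hxR : x ∈ Metric.ball xs R := by
    rw [Metric.mem_ball, dist_eq_norm]
    linarith
  have hρ0 : 0 ≤ ‖x - xs‖ := norm_nonneg _
  have hT := hTaylor x hxR
  have hG : ‖G x‖ ≤ (‖A‖ + L) * ‖x - xs‖ := by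
    have h1 : ‖G x‖ ≤ ‖A (x - xs)‖ + ‖G x - A (x - xs)‖ := norm_le_norm_add_norm_sub' _ _
    have h2 := A.le_opNorm (x - xs)
    have h3 : L * ‖x - xs‖ ^ 2 ≤ L * ‖x - xs‖ := by
      gcongr
      nlinarith
    linarith
  have hKA : ‖K - A‖ ≤ M * ‖x - xs‖ := by
    have h1 : ‖K - A‖ ≤ ‖K - fderiv ℝ G x‖ + ‖fderiv ℝ G x - A‖ :=
      norm_sub_le_norm_sub_add_norm_sub _ _ _
    have h2 : γ * ‖G x‖ ≤ γ * ((‖A‖ + L) * ‖x - xs‖) := by gcongr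
    have h3 := hD x hxR
    rw [hM]
    linarith
  have hbc : b * (M * ‖x - xs‖) ≤ 1 / 2 := by
    rw [le_div_iff₀ (by positivity)] at hρM
    linarith
  have hKb := norm_le_of_near hb hAb hKA hbc
  refine ⟨isUnit_of_norm_le hKb, fun d hd => (hKb _).trans ?_⟩
  have he : K (x - d - xs) = (K - A) (x - xs) - (G x - A (x - xs)) := by
    rw [← hd]
    simp only [map_sub, ContinuousLinearMap.sub_apply]
    abel
  have h1 : ‖K (x - d - xs)‖ ≤ (M + L) * ‖x - xs‖ ^ 2 := by
    rw [he]
    have h2 := (K - A).le_of_opNorm_le hKA (x - xs)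
    have h3 := norm_sub_le ((K - A) (x - xs)) (G x - A (x - xs))
    linarith
  calc 2 * b * ‖K (x - d - xs)‖ ≤ 2 * b * ((M + L) * ‖x - xs‖ ^ 2) := by gcongr
    _ = _ := by ring
end

section
/- Let E be a finite-dimensional real inner product space, G : E → E differentiable, and define θ(y) = ½‖G(y)‖². Assume θ is differentiable with gradient Lipschitz continuous on E with constant L_θ > 0. Fix x ∈ E with G(x) ≠ 0, σ ∈ (0, ½), an invertible linear map K : E → E, constants M ≥ ‖K⁻¹‖ and ρ ≥ ‖DG(x) − K‖, and suppose 1 − ρM > σ. Set Δx = −K⁻¹G(x). Then for every t with 0 < t ≤ 1 and t ≤ 2(1 − ρM − σ)/(L_θ M²), the Armijo condition θ(x + tΔx) ≤ (1 − 2tσ)θ(x) holds. -/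
/-!
The Lipschitz gradient gives the quadratic upper bound
`θ (x + tΔx) ≤ θ x + t θ'(x)Δx + (L/2) t² ‖Δx‖²` (`descent_lemma`). Writing
`DG(x) Δx = -G x + (DG(x) - K) Δx` gives `θ'(x)Δx ≤ -(1 - ρM) ‖G x‖²`
(`slope_newton_step_le`), and `‖Δx‖ ≤ M ‖G x‖`. The decrease is therefore at least
`t (1 - ρM - (L/2) t M²) ‖G x‖²`, which is at least `t σ ‖G x‖² = 2 t σ θ x` exactly under
the stated upper bound on `t`.
-/

theorem descent_lemma {E : Type*} [NormedAddCommGroup E] [InnerProductSpace ℝ E]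
    [CompleteSpace E] {θ : E → ℝ} (hθ : Differentiable ℝ θ) {L : ℝ} (hL : 0 ≤ L)
    (hLip : LipschitzWith (Real.toNNReal L) (fun y => gradient θ y)) (x d : E)
    {t : ℝ} (ht : 0 ≤ t) :
    θ (x + t • d) ≤ θ x + t * fderiv ℝ θ x d + L / 2 * t ^ 2 * ‖d‖ ^ 2 := by
  let φ : ℝ → ℝ := fun s => θ (x + s • d) - s * fderiv ℝ θ x d - L / 2 * s ^ 2 * ‖d‖ ^ 2
  have hφ : ∀ s, HasDerivAt φ
      (fderiv ℝ θ (x + s • d) d - fderiv ℝ θ x d - L * s * ‖d‖ ^ 2) s := by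
    intro s
    have h1 : HasDerivAt (fun s : ℝ => x + s • d) d s := by
      simpa using ((hasDerivAt_id s).smul_const d).const_add x
    have h2 := (hθ (x + s • d)).hasFDerivAt.comp_hasDerivAt s h1
    have h3 := (hasDerivAt_id s).mul_const (fderiv ℝ θ x d)
    have h4 := (((hasDerivAt_id s).pow 2).const_mul (L / 2)).mul_const (‖d‖ ^ 2)
    refine ((h2.sub h3).sub h4).congr_deriv ?_
    simp only [id]
    ring
  have hanti : AntitoneOn φ (Set.Ici 0) := by
    refine antitoneOn_of_deriv_nonpos (convex_Ici 0)
      (fun s _ => (hφ s).continuousAt.continuousWithinAt)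
      (fun s _ => (hφ s).differentiableAt.differentiableWithinAt) ?_
    intro s hs
    rw [interior_Ici, Set.mem_Ioi] at hs
    rw [(hφ s).deriv]
    have hgrad : ‖gradient θ (x + s • d) - gradient θ x‖ ≤ L * (s * ‖d‖) := by
      have h := hLip.dist_le_mul (x + s • d) x
      rwa [dist_eq_norm, dist_eq_norm, add_sub_cancel_left, norm_smul, Real.norm_of_nonneg hs.le,
        Real.coe_toNNReal _ hL] at h
    have hinner : ∀ y, inner ℝ (gradient θ y) d = fderiv ℝ θ y d := fun y => by
      simp [gradient]
    have h := real_inner_le_norm (gradient θ (x + s • d) - gradient θ x) d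
    rw [inner_sub_left, hinner, hinner] at h
    nlinarith [mul_le_mul_of_nonneg_right hgrad (norm_nonneg d)]
  have h : φ t ≤ φ 0 := hanti Set.self_mem_Ici ht ht
  simp only [φ, zero_smul, add_zero] at h
  linarith

/-- The slope of `½‖G‖²` along the regularized Newton step `-K⁻¹ G x`. -/
theorem slope_newton_step_le {E : Type*} [NormedAddCommGroup E] [InnerProductSpace ℝ E]
    {G : E → E} {x : E} (hG : DifferentiableAt ℝ G x) (K : E ≃L[ℝ] E) {M ρ : ℝ}
    (hM : ‖(K.symm : E →L[ℝ] E)‖ ≤ M)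
    (hρ : ‖fderiv ℝ G x - (K : E →L[ℝ] E)‖ ≤ ρ) :
    fderiv ℝ (fun y => (1 / 2) * ‖G y‖ ^ 2) x (-(K.symm (G x))) ≤
      -(1 - ρ * M) * ‖G x‖ ^ 2 := by
  have hderiv : fderiv ℝ (fun y => (1 / 2) * ‖G y‖ ^ 2) x (-(K.symm (G x))) =
      inner ℝ (G x) (fderiv ℝ G x (-(K.symm (G x)))) := by
    rw [(hG.hasFDerivAt.norm_sq.const_mul (1 / 2)).fderiv]
    simp
  have hsplit : fderiv ℝ G x (-(K.symm (G x))) =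
      -G x + (fderiv ℝ G x - (K : E →L[ℝ] E)) (-(K.symm (G x))) := by
    simp
  have hstep : ‖-(K.symm (G x))‖ ≤ M * ‖G x‖ := by
    rw [norm_neg]
    exact (K.symm : E →L[ℝ] E).le_of_opNorm_le hM (G x)
  have herr : ‖(fderiv ℝ G x - (K : E →L[ℝ] E)) (-(K.symm (G x)))‖ ≤ ρ * (M * ‖G x‖) :=
    (ContinuousLinearMap.le_of_opNorm_le _ hρ _).trans
      (mul_le_mul_of_nonneg_left hstep ((norm_nonneg _).trans hρ))
  have hcs := real_inner_le_norm (G x)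
    ((fderiv ℝ G x - (K : E →L[ℝ] E)) (-(K.symm (G x))))
  rw [hderiv, hsplit, inner_add_right, inner_neg_right, real_inner_self_eq_norm_sq]
  nlinarith [mul_le_mul_of_nonneg_left herr (norm_nonneg (G x))]

/-- sufficiently small step lengths satisfy the Armijo condition for the
merit function `θ = ½‖G‖²` along the regularized Newton direction `Δx = −K⁻¹G(x)`.
Here `M ≥ ‖K⁻¹‖`, `ρ ≥ ‖DG(x) − K‖`, `1 − ρM > σ ∈ (0,½)`, and the gradient of `θ` is
Lipschitz with constant `L_θ > 0`; then every `t` with `0 < t ≤ 1` and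
`t ≤ 2(1 − ρM − σ)/(L_θ M²)` satisfies `θ(x + tΔx) ≤ (1 − 2tσ)θ(x)`. -/
theorem statement_18 {E : Type*} [NormedAddCommGroup E] [InnerProductSpace ℝ E]
    [FiniteDimensional ℝ E]
    (G : E → E) (hG : Differentiable ℝ G)
    (θ : E → ℝ) (hθ : θ = fun y => (1 / 2) * ‖G y‖ ^ 2)
    (hθdiff : Differentiable ℝ θ)
    (Lθ : ℝ) (hLθ : 0 < Lθ)
    (hgradLip : LipschitzWith (Real.toNNReal Lθ) (fun y => gradient θ y))
    (x : E) (hx : G x ≠ 0)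
    (σ : ℝ) (hσ : σ ∈ Set.Ioo (0 : ℝ) (1 / 2))
    (K : E ≃L[ℝ] E) (M ρ : ℝ)
    (hM : ‖(K.symm : E →L[ℝ] E)‖ ≤ M)
    (hρ : ‖fderiv ℝ G x - (K : E →L[ℝ] E)‖ ≤ ρ)
    (hcond : σ < 1 - ρ * M)
    (Δx : E) (hΔx : Δx = -(K.symm (G x))) :
    ∀ t : ℝ, 0 < t → t ≤ 1 → t ≤ 2 * (1 - ρ * M - σ) / (Lθ * M ^ 2) →
      θ (x + t • Δx) ≤ (1 - 2 * t * σ) * θ x := by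
  intro t ht _ htle
  have hM0 : 0 ≤ M := (norm_nonneg _).trans hM
  -- If `M = 0` the upper bound on `t` is a division by zero, i.e. `t ≤ 0`.
  have hMpos : 0 < M := by
    rcases hM0.eq_or_lt with h | h
    · rw [← h] at htle
      norm_num at htle
      linarith
    · exact h
  rw [le_div_iff₀ (by positivity)] at htle
  have hdesc := descent_lemma hθdiff hLθ.le hgradLip x Δx ht.le
  have hslope : fderiv ℝ θ x Δx ≤ -(1 - ρ * M) * ‖G x‖ ^ 2 := by
    rw [hθ, hΔx]
    exact slope_newton_step_le (hG x) K hM hρ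
  have hstep : ‖Δx‖ ≤ M * ‖G x‖ := by
    rw [hΔx, norm_neg]
    exact (K.symm : E →L[ℝ] E).le_of_opNorm_le hM (G x)
  have hsq : ‖Δx‖ ^ 2 ≤ M ^ 2 * ‖G x‖ ^ 2 := by
    rw [← mul_pow]
    gcongr
  have hθx : θ x = (1 / 2) * ‖G x‖ ^ 2 := by rw [hθ]
  have h1 := mul_le_mul_of_nonneg_left hslope ht.le
  have h2 := mul_le_mul_of_nonneg_left hsq (show 0 ≤ Lθ / 2 * t ^ 2 by positivity)
  have h3 := mul_le_mul_of_nonneg_left htle (show 0 ≤ t / 2 * ‖G x‖ ^ 2 by positivity)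
  have h4 : 2 * t * σ * θ x = t * σ * ‖G x‖ ^ 2 := by rw [hθx]; ring
  linarith
end

section
/- Let E be a finite-dimensional real inner product space, G : E → E continuously differentiable on a neighborhood of x*, with G(x*) = 0, with DG Lipschitz continuous on a neighborhood of x*, and with DG(x*) invertible. Fix γ ≥ 0 and σ ∈ (0, ½). Then there exists r > 0 such that for every x with ‖x − x*‖ ≤ r and every invertible linear map K : E → E with ‖K − DG(x)‖ ≤ γ‖G(x)‖, the full Newton step Δx = −K⁻¹G(x) satisfies ½‖G(x + Δx)‖² ≤ (1 − 2σ)·½‖G(x)‖²; i.e. the unit step t = 1 satisfies the Armijo condition near x*. -/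
/-!
Write `A = DG(x*)` and `d = Δx`, so that `K d = -G x`. Strict differentiability of `G` at `x*` gives
`‖G (x + d) - G x - A d‖ ≤ c ‖d‖` near `x*` for any prescribed `c > 0`, while continuity of `DG` and
of `G` give `‖K - A‖ ≤ 2 c`. Since `G x = -K d`, this yields `‖G (x + d)‖ ≤ 3 c ‖d‖`. Invertibility
of `A`, which persists for `K` with a uniform bound on the inverse, gives
`‖d‖ ≤ 2 ‖A⁻¹‖ ‖G x‖`; hence `‖G (x + d)‖ ≤ 6 c ‖A⁻¹‖ ‖G x‖`, and `c` may be chosen so that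
`6 c ‖A⁻¹‖ ≤ 1 - 2 σ < 1`.
-/

/-- acceptance of unit steps near the solution. If `G` is C¹ on a
neighborhood of a root `x*`, `DG` is Lipschitz on a neighborhood of `x*`, and `DG(x*)`
is invertible, then for any `γ ≥ 0` and `σ ∈ (0,½)` there is `r > 0` such that for all
`x` with `‖x − x*‖ ≤ r` and all invertible linear maps `K` with
`‖K − DG(x)‖ ≤ γ‖G(x)‖`, the full Newton step `Δx = −K⁻¹G(x)` satisfies
`½‖G(x + Δx)‖² ≤ (1 − 2σ)·½‖G(x)‖²`. -/
theorem statement_19 {E : Type*} [NormedAddCommGroup E] [InnerProductSpace ℝ E]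
    [FiniteDimensional ℝ E]
    (G : E → E) (xs : E) (hroot : G xs = 0)
    (s : Set E) (hs : s ∈ nhds xs) (hC1 : ContDiffOn ℝ 1 G s)
    (t : Set E) (ht : t ∈ nhds xs) (LG : NNReal)
    (hLip : LipschitzOnWith LG (fun x => fderiv ℝ G x) t)
    (hinv : IsUnit (fderiv ℝ G xs))
    (γ : ℝ) (hγ : 0 ≤ γ) (σ : ℝ) (hσ : σ ∈ Set.Ioo (0 : ℝ) (1 / 2)) :
    ∃ r > (0 : ℝ), ∀ x : E, ‖x - xs‖ ≤ r →
      ∀ K : E ≃L[ℝ] E, ‖(K : E →L[ℝ] E) - fderiv ℝ G x‖ ≤ γ * ‖G x‖ →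
        (1 / 2) * ‖G (x + -(K.symm (G x)))‖ ^ 2 ≤ (1 - 2 * σ) * ((1 / 2) * ‖G x‖ ^ 2) := by
  obtain ⟨hσ0, hσ1⟩ := hσ
  have hcd : ContDiffAt ℝ 1 G xs := hC1.contDiffAt hs
  have hstrict : HasStrictFDerivAt G (fderiv ℝ G xs) xs := hcd.hasStrictFDerivAt one_ne_zero
  have hDcont : ContinuousAt (fderiv ℝ G) xs :=
    (hcd.fderiv_right (m := 0) (by norm_num)).continuousAt
  have hGcont : ContinuousAt G xs := hcd.continuousAt
  obtain ⟨u, hu⟩ := hinv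
  set A := fderiv ℝ G xs with hA
  set M : ℝ := ‖(↑u⁻¹ : E →L[ℝ] E)‖ with hM
  have hM0 : 0 ≤ M := norm_nonneg _
  have hAinv : ∀ v, ‖v‖ ≤ M * ‖A v‖ := fun v => by
    have h1 : (↑u⁻¹ : E →L[ℝ] E) (A v) = v := by
      rw [← hu]
      exact congrArg (fun T : E →L[ℝ] E => T v) u.inv_mul
    calc ‖v‖ = ‖(↑u⁻¹ : E →L[ℝ] E) (A v)‖ := by rw [h1]
      _ ≤ M * ‖A v‖ := ContinuousLinearMap.le_opNorm _ _
  -- `c` makes the final contraction factor `6 c M` at most `1 - 2 σ`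
  obtain ⟨c, hc0, hcM⟩ : ∃ c : ℝ, 0 < c ∧ 6 * (c * M) ≤ 1 - 2 * σ := by
    refine ⟨(1 - 2 * σ) / (6 * (M + 1)), div_pos (by linarith) (by linarith), ?_⟩
    have h : 6 * ((1 - 2 * σ) / (6 * (M + 1)) * M) = (1 - 2 * σ) * (M / (M + 1)) := by
      field_simp
    rw [h]
    exact mul_le_of_le_one_right (by linarith) ((div_le_one (by linarith)).2 (by linarith))
  obtain ⟨δ, hδ, hlin⟩ := Metric.eventually_nhds_iff.1 (hstrict.isLittleO.def hc0)
  obtain ⟨r₁, hr₁, hD⟩ := Metric.continuousAt_iff.1 hDcont c hc0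
  -- `‖G x‖ < η` bounds the regularization error by `c` and the step length by `δ / 2`
  obtain ⟨η, hη0, hηγ, hηM⟩ : ∃ η : ℝ, 0 < η ∧ γ * η ≤ c ∧ 2 * M * η < δ / 2 := by
    have h1 : ∀ᶠ η in nhds (0 : ℝ), γ * η < c :=
      (continuous_const.mul continuous_id).continuousAt.eventually_lt
        continuousAt_const (by simpa using hc0)
    have h2 : ∀ᶠ η in nhds (0 : ℝ), 2 * M * η < δ / 2 :=
      (continuous_const.mul continuous_id).continuousAt.eventually_lt
        continuousAt_const (by simpa using hδ)
    obtain ⟨η, ⟨ha, hb⟩, hp⟩ := (((h1.and h2).filter_mono nhdsWithin_le_nhds).and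
      (self_mem_nhdsWithin : Set.Ioi (0 : ℝ) ∈ nhdsWithin 0 (Set.Ioi 0))).exists
    exact ⟨η, hp, ha.le, hb⟩
  obtain ⟨r₂, hr₂, hG⟩ := Metric.continuousAt_iff.1 hGcont η hη0
  refine ⟨min (δ / 2) (min r₁ r₂) / 2, by positivity, fun x hx K hK => ?_⟩
  have hpos : 0 < min (δ / 2) (min r₁ r₂) := by positivity
  have hxlt : dist x xs < min (δ / 2) (min r₁ r₂) := by rw [dist_eq_norm]; linarith
  obtain ⟨hxδ, hx12⟩ := lt_min_iff.1 hxlt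
  obtain ⟨hx1, hx2⟩ := lt_min_iff.1 hx12
  have hGx : ‖G x‖ < η := by simpa [hroot] using hG hx2
  have hKA : ‖(K : E →L[ℝ] E) - A‖ ≤ 2 * c := by
    have h1 : ‖fderiv ℝ G x - A‖ < c := by simpa [dist_eq_norm] using hD hx1
    have h2 : γ * ‖G x‖ ≤ γ * η := mul_le_mul_of_nonneg_left hGx.le hγ
    have h3 := norm_sub_le_norm_sub_add_norm_sub (K : E →L[ℝ] E) (fderiv ℝ G x) A
    linarith
  set d : E := -(K.symm (G x)) with hd
  have hKd : K d = -G x := by simp [hd]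
  have hKAd : ‖K d - A d‖ ≤ 2 * c * ‖d‖ := by
    simpa using ((K : E →L[ℝ] E) - A).le_of_opNorm_le hKA d
  have hdle : ‖d‖ ≤ 2 * M * ‖G x‖ := by
    have h1 : ‖A d‖ ≤ ‖G x‖ + 2 * c * ‖d‖ := by
      have h := norm_sub_le (K d) (K d - A d)
      rw [sub_sub_cancel, hKd, norm_neg] at h
      rw [hKd] at hKAd
      linarith
    have h2 := (hAinv d).trans (mul_le_mul_of_nonneg_left h1 hM0)
    have h3 : c * M * ‖d‖ ≤ 1 / 6 * ‖d‖ :=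
      mul_le_mul_of_nonneg_right (by linarith) (norm_nonneg d)
    nlinarith [norm_nonneg d]
  have hxd : dist (x + d) xs < δ := by
    have h1 : 2 * M * ‖G x‖ ≤ 2 * M * η := mul_le_mul_of_nonneg_left hGx.le (by positivity)
    have h2 := dist_triangle (x + d) x xs
    rw [dist_self_add_left] at h2
    linarith
  have hrem : ‖G (x + d) - G x - A d‖ ≤ c * ‖d‖ := by
    have h := @hlin (x + d, x) (by
      rw [Prod.dist_eq]
      exact max_lt hxd (by linarith))
    simpa using h
  have hmain : ‖G (x + d)‖ ≤ (1 - 2 * σ) * ‖G x‖ := by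
    have h1 : G (x + d) = (G (x + d) - G x - A d) - (K d - A d) := by
      rw [hKd]; abel
    have h2 := norm_sub_le (G (x + d) - G x - A d) (K d - A d)
    rw [← h1] at h2
    calc ‖G (x + d)‖ ≤ 3 * c * ‖d‖ := by linarith
      _ ≤ 3 * c * (2 * M * ‖G x‖) := mul_le_mul_of_nonneg_left hdle (by positivity)
      _ = 6 * (c * M) * ‖G x‖ := by ring
      _ ≤ (1 - 2 * σ) * ‖G x‖ := mul_le_mul_of_nonneg_right hcM (norm_nonneg _)
  have hsq := pow_le_pow_left₀ (norm_nonneg _) hmain 2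
  -- the factor `1 - 2 σ` lies in `[0, 1]`, so its square is no larger
  have hq : (1 - 2 * σ) ^ 2 * ‖G x‖ ^ 2 ≤ (1 - 2 * σ) * ‖G x‖ ^ 2 :=
    mul_le_mul_of_nonneg_right (by nlinarith) (sq_nonneg _)
  rw [mul_pow] at hsq
  linarith
end
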